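/- arXiv:2305.06722 — 2 statements merged into one kernel-verified Lean document; each statement's English description precedes it below -/
import Mathlib

section
/- For every n ∈ {1,2,3} and every s > 0 there exists a constant C > 0 such that for all p ∈ ℝ³: ∫_{ℝ³} |k|^n B₀(k)² ω(k)^{2−2s} ω(p−k)^{−n} dk ≤ C; i.e., the left-hand side is bounded uniformly in p. -/
open MeasureTheory

noncomputable section

/-- The dispersion relation `ω(k) = √(1+|k|²)` of the massive scalar field. -/
def ω (k : EuclideanSpace ℝ (Fin 3)) : ℝ := Real.sqrt (1 + ‖k‖ ^ 2)

/-- The Gross dressing form factor `B₀(k) = 1/(√(ω(k))·(|k|²+ω(k)))`. -/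
def B0 (k : EuclideanSpace ℝ (Fin 3)) : ℝ := 1 / (Real.sqrt (ω k) * (‖k‖ ^ 2 + ω k))

/-!
Since `‖k‖ ≤ ω k` and `B0 k ^ 2 ≤ ω k ^ (-5)`, the integrand with exponent `a` in place of `n` is at
most `ω k ^ (-(3 + 2 * s - a)) * ω (p - k) ^ (-a)`. Hölder's inequality with the weights
`(3 + 2 * s - a) / (3 + 2 * s)` and `a / (3 + 2 * s)`, together with the invariance of Lebesgue
measure under `k ↦ p - k`, bounds the integral of this product by that of `ω k ^ (-(3 + 2 * s))`,
its value at `p = 0`. This is the bound that symmetric rearrangement gives, and it is finite in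
dimension three.
-/

open scoped ENNReal

theorem lintegral_rpow_mul_rpow_sub_left_le {G : Type*} [AddGroup G] [MeasurableSpace G]
    [MeasurableAdd G] [MeasurableNeg G] {μ : Measure G} [μ.IsAddLeftInvariant] [μ.IsNegInvariant]
    {f : G → ℝ≥0∞} (hf : AEMeasurable f μ) {a b : ℝ} (ha : 0 ≤ a) (hb : 0 ≤ b) (p : G) :
    ∫⁻ k, f k ^ a * f (p - k) ^ b ∂μ ≤ ∫⁻ k, f k ^ (a + b) ∂μ := by
  rcases (add_nonneg ha hb).eq_or_lt' with hab | hab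
  · obtain ⟨rfl, rfl⟩ := (add_eq_zero_iff_of_nonneg ha hb).1 hab
    simp
  have hweights : a / (a + b) + b / (a + b) = 1 := by field_simp
  have hroot (x : ℝ≥0∞) (c : ℝ) : (x ^ (a + b)) ^ (c / (a + b)) = x ^ c := by
    rw [← ENNReal.rpow_mul, mul_div_cancel₀ c hab.ne']
  have hreflect : AEMeasurable (fun k ↦ f (p - k)) μ :=
    hf.comp_quasiMeasurePreserving (Measure.measurePreserving_sub_left μ p).quasiMeasurePreserving
  calc ∫⁻ k, f k ^ a * f (p - k) ^ b ∂μ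
      = ∫⁻ k, (f k ^ (a + b)) ^ (a / (a + b)) * (f (p - k) ^ (a + b)) ^ (b / (a + b)) ∂μ := by
        simp only [hroot]
    _ ≤ (∫⁻ k, f k ^ (a + b) ∂μ) ^ (a / (a + b)) *
          (∫⁻ k, f (p - k) ^ (a + b) ∂μ) ^ (b / (a + b)) :=
        ENNReal.lintegral_mul_norm_pow_le (hf.pow_const _) (hreflect.pow_const _)
          (div_nonneg ha hab.le) (div_nonneg hb hab.le) hweights
    _ = ∫⁻ k, f k ^ (a + b) ∂μ := by
        rw [lintegral_sub_left_eq_self (fun k ↦ f k ^ (a + b)) p,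
          ← ENNReal.rpow_add_of_nonneg _ _ (div_nonneg ha hab.le) (div_nonneg hb hab.le),
          hweights, ENNReal.rpow_one]

section DispersionRelation

variable (k : EuclideanSpace ℝ (Fin 3))

theorem one_le_ω : 1 ≤ ω k :=
  Real.one_le_sqrt.2 (le_add_of_nonneg_right (sq_nonneg ‖k‖))

theorem ω_pos : 0 < ω k :=
  one_pos.trans_le (one_le_ω k)

theorem ω_sq : ω k ^ 2 = 1 + ‖k‖ ^ 2 :=
  Real.sq_sqrt (by positivity)

theorem norm_le_ω : ‖k‖ ≤ ω k :=
  Real.le_sqrt_of_sq_le (le_add_of_nonneg_left zero_le_one)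

theorem B0_sq_le : B0 k ^ 2 ≤ ω k ^ (-5 : ℝ) := by
  have hω : 0 < ω k := ω_pos k
  have hdenom : ω k ^ 2 ≤ ‖k‖ ^ 2 + ω k := by linarith [ω_sq k, one_le_ω k]
  calc B0 k ^ 2 = (ω k * (‖k‖ ^ 2 + ω k) ^ 2)⁻¹ := by
        rw [B0, one_div, inv_pow, mul_pow, Real.sq_sqrt hω.le]
    _ ≤ (ω k * (ω k ^ 2) ^ 2)⁻¹ := by gcongr
    _ = ω k ^ (-5 : ℝ) := by
        rw [Real.rpow_neg hω.le, Real.rpow_ofNat]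
        ring

end DispersionRelation

theorem measurable_ω : Measurable ω := by
  unfold ω
  fun_prop

theorem integrable_ω_rpow_neg {r : ℝ} (hr : 3 < r) : Integrable (fun k ↦ ω k ^ (-r)) := by
  have hω (k : EuclideanSpace ℝ (Fin 3)) : ω k ^ (-r) = (1 + ‖k‖ ^ 2) ^ (-r / 2) := by
    rw [← ω_sq, ← Real.rpow_natCast_mul (ω_pos k).le]
    congr 1
    push_cast
    ring
  simp only [hω]
  exact integrable_rpow_neg_one_add_norm_sq (by simpa using hr)

theorem lintegral_ω_rpow_mul_ω_rpow_sub_left_le {a b : ℝ} (ha : 0 ≤ a) (hb : 0 ≤ b)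
    (p : EuclideanSpace ℝ (Fin 3)) :
    ∫⁻ k, ENNReal.ofReal (ω k ^ (-a) * ω (p - k) ^ (-b)) ≤
      ∫⁻ k, ENNReal.ofReal (ω k ^ (-(a + b))) := by
  have hinv (c : ℝ) (k : EuclideanSpace ℝ (Fin 3)) :
      ENNReal.ofReal (ω k ^ (-c)) = ENNReal.ofReal (ω k)⁻¹ ^ c := by
    rw [ENNReal.ofReal_rpow_of_pos (inv_pos.2 (ω_pos k)), Real.rpow_neg_eq_inv_rpow]
  simp only [ENNReal.ofReal_mul (Real.rpow_nonneg (ω_pos _).le _), hinv]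
  exact lintegral_rpow_mul_rpow_sub_left_le measurable_ω.inv.ennreal_ofReal.aemeasurable ha hb p

theorem norm_rpow_mul_B0_sq_mul_ω_rpow_le {a : ℝ} (ha : 0 ≤ a) (s : ℝ)
    (k : EuclideanSpace ℝ (Fin 3)) :
    ‖k‖ ^ a * B0 k ^ 2 * ω k ^ (2 - 2 * s) ≤ ω k ^ (-(3 + 2 * s - a)) := by
  have hω : 0 < ω k := ω_pos k
  calc ‖k‖ ^ a * B0 k ^ 2 * ω k ^ (2 - 2 * s)
      ≤ ω k ^ a * ω k ^ (-5 : ℝ) * ω k ^ (2 - 2 * s) := by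
        gcongr
        exacts [norm_le_ω k, B0_sq_le k]
    _ = ω k ^ (-(3 + 2 * s - a)) := by
        rw [← Real.rpow_add hω, ← Real.rpow_add hω]
        congr 1
        ring

theorem rearrangement_convolution_bound_general {a s : ℝ} (ha : 0 ≤ a) (hs : 0 < s)
    (has : a ≤ 3 + 2 * s) :
    ∃ C > 0, ∀ p : EuclideanSpace ℝ (Fin 3),
      ∫⁻ k, ENNReal.ofReal (‖k‖ ^ a * B0 k ^ 2 * ω k ^ (2 - 2 * s) * ω (p - k) ^ (-a)) ≤
        ENNReal.ofReal C := by
  have hfin : ∫⁻ k, ENNReal.ofReal (ω k ^ (-(3 + 2 * s))) < ∞ :=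
    (integrable_ω_rpow_neg (by linarith)).lintegral_lt_top
  obtain ⟨C, -, hC, -⟩ := ENNReal.lt_iff_exists_real_btwn.1 hfin
  refine ⟨C, ENNReal.ofReal_pos.1 (pos_of_gt hC), fun p ↦ ?_⟩
  calc ∫⁻ k, ENNReal.ofReal (‖k‖ ^ a * B0 k ^ 2 * ω k ^ (2 - 2 * s) * ω (p - k) ^ (-a))
      ≤ ∫⁻ k, ENNReal.ofReal (ω k ^ (-(3 + 2 * s - a)) * ω (p - k) ^ (-a)) := by
        gcongr with k
        exacts [Real.rpow_nonneg (ω_pos _).le _, norm_rpow_mul_B0_sq_mul_ω_rpow_le ha s k]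
    _ ≤ ∫⁻ k, ENNReal.ofReal (ω k ^ (-(3 + 2 * s - a + a))) :=
        lintegral_ω_rpow_mul_ω_rpow_sub_left_le (sub_nonneg.2 has) ha p
    _ ≤ ENNReal.ofReal C := by
        rw [sub_add_cancel]
        exact hC.le

/-- For `n ∈ {1,2,3}` and `s > 0` there is `C > 0` such that
`∫ |k|^n B₀(k)² ω(k)^{2−2s} ω(p−k)^{−n} dk ≤ C` uniformly in `p ∈ ℝ³`. -/
theorem rearrangement_convolution_bound (n : ℕ) (hn : n = 1 ∨ n = 2 ∨ n = 3)
    (s : ℝ) (hs : 0 < s) :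
    ∃ C > 0, ∀ p : EuclideanSpace ℝ (Fin 3),
      ∫⁻ k, ENNReal.ofReal
          (‖k‖ ^ n * B0 k ^ 2 * ω k ^ (2 - 2 * s) * ω (p - k) ^ (-(n : ℝ))) ≤
        ENNReal.ofReal C := by
  have hn3 : (n : ℝ) ≤ 3 := by exact_mod_cast (show n ≤ 3 by omega)
  simpa only [Real.rpow_natCast] using
    rearrangement_convolution_bound_general n.cast_nonneg hs (by linarith : (n : ℝ) ≤ 3 + 2 * s)

end
end

section
/- For every ε > 0 there exists C > 0 such that the following holds. Let u : ℝ³ → ℂ be differentiable with u, ∇u ∈ L²(ℝ³), and let α : ℝ³ → ℂ be measurable with ∫_{ℝ³} ω(k)|α(k)|² dk < ∞ and ∫_{ℝ³} ω(k)^{−1/2}|α(k)| dk < ∞. Then the function x ↦ (∫_{ℝ³} ω(k)^{−1/2} e^{ik·x} α(k) dk)·u(x) is in L²(ℝ³) with ‖(x ↦ (∫_{ℝ³} ω(k)^{−1/2} e^{ik·x} α(k) dk) u(x))‖_{L²} ≤ ε(‖u‖_{H¹}² + ∫_{ℝ³} ω(k)|α(k)|² dk) + C ‖u‖_{L²}².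 -/
/-!
With Mathlib's normalisation of the Fourier transform, the field `∫ ω(k)^{-1/2} e^{ik·x} α(k) dk` is
`𝓕 b`, where `b` is `ω^{-1/2} α` up to a dilation, and `∫ ω |α|²` controls `‖⟨x⟩ b‖²`. Writing
`u = 𝓕 v`, the product `𝓕 b · u` is `𝓕 (b ⋆ v)`, so by Plancherel its norm is that of `b ⋆ v`.
Cauchy–Schwarz with weights gives

  `‖b ⋆ v‖² ≤ sup_x (∫ ⟨y⟩^{-2s} ⟨x - y⟩^{-2r} dy) · ‖⟨x⟩ˢ b‖² ‖⟨x⟩ʳ v‖²`,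

and the supremum is finite as soon as `s + r > d/2`, since the integrand is at most
`⟨y⟩^{-2(s+r)} + ⟨x - y⟩^{-2(s+r)}`. For `s = 1` and `d = 3` some `r < 1` is allowed, and then
`⟨x⟩^{2r} ≤ η ⟨x⟩² + C_η` makes the `H¹` norm of `u` enter with an arbitrarily small constant. The
inequality `√(ab) ≤ a + b` turns the product of norms into a sum. As `v` need not be integrable, it
is first truncated to a set of finite measure.
-/

open MeasureTheory
open scoped ENNReal

noncomputable section

/-- The square of the `H¹`-norm, `‖u‖_{H¹}² = ‖u‖_{L²}² + ‖∇u‖_{L²}²`. -/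
def H1sq (u : EuclideanSpace ℝ (Fin 3) → ℂ) : ℝ :=
  (∫ x, ‖u x‖ ^ 2) + ∫ x, ‖fderiv ℝ u x‖ ^ 2

section CauchySchwarz

theorem sq_rpow_one_half (a : ℝ≥0∞) : (a ^ (1 / 2 : ℝ)) ^ 2 = a := by
  simpa using ENNReal.rpow_inv_natCast_pow two_ne_zero a

theorem le_add_of_sq_le_mul {x a b : ℝ≥0∞} (h : x ^ 2 ≤ a * b) : x ≤ a + b := by
  refine (ENNReal.pow_le_pow_left_iff two_ne_zero).1 (h.trans ?_)
  rw [sq]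
  exact mul_le_mul' le_self_add le_add_self

theorem inv_rpow_mul_rpow_le (a c : ℝ≥0∞) {s t : ℝ} (hs : 0 ≤ s) (ht : 0 ≤ t) :
    (a ^ s * c ^ t)⁻¹ ≤ a ^ (-(s + t)) + c ^ (-(s + t)) := by
  simp only [ENNReal.rpow_neg, ENNReal.rpow_add_of_nonneg _ _ hs ht]
  rcases le_total a c with hac | hca
  · exact le_add_right (ENNReal.inv_le_inv.2 (by gcongr))
  · exact le_add_left (ENNReal.inv_le_inv.2 (by gcongr))

theorem rpow_le_mul_rpow_add {r t : ℝ} (hr : 0 ≤ r) (hrt : r < t) {δ : ℝ≥0∞} (hδ : δ ≠ 0)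
    (hδ_top : δ ≠ ⊤) (a : ℝ≥0∞) :
    a ^ r ≤ δ * a ^ t + (δ⁻¹) ^ (r / (t - r)) := by
  have htr : 0 < t - r := sub_pos.2 hrt
  rcases le_total (a ^ (t - r)) δ⁻¹ with hsmall | hlarge
  · refine le_add_left ?_
    calc a ^ r = (a ^ (t - r)) ^ (r / (t - r)) := by
          rw [← ENNReal.rpow_mul, mul_div_cancel₀ _ htr.ne']
      _ ≤ _ := by gcongr
  · refine le_add_right ?_
    calc a ^ r = 1 * a ^ r := (one_mul _).symm
      _ ≤ (δ * a ^ (t - r)) * a ^ r := by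
          gcongr
          rw [← ENNReal.mul_inv_cancel hδ hδ_top]
          gcongr
      _ = δ * a ^ t := by
          rw [mul_assoc, ← ENNReal.rpow_add_of_nonneg _ _ htr.le hr, sub_add_cancel]

variable {X : Type*} [MeasurableSpace X] {μ : Measure X}

theorem sq_lintegral_mul_le {f g : X → ℝ≥0∞} (hf : AEMeasurable f μ) (hg : AEMeasurable g μ) :
    (∫⁻ x, f x * g x ∂μ) ^ 2 ≤ (∫⁻ x, f x ^ 2 ∂μ) * ∫⁻ x, g x ^ 2 ∂μ := by
  have holder := ENNReal.lintegral_mul_le_Lp_mul_Lq μ Real.HolderConjugate.two_two hf hg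
  simpa only [mul_pow, sq_rpow_one_half, ENNReal.rpow_two, Pi.mul_apply]
    using pow_le_pow_left' holder 2

theorem sq_lintegral_le_lintegral_inv_mul {w f : X → ℝ≥0∞} (hw : Measurable w)
    (hw₀ : ∀ x, w x ≠ 0) (hw_top : ∀ x, w x ≠ ⊤) (hf : Measurable f) :
    (∫⁻ x, f x ∂μ) ^ 2 ≤ (∫⁻ x, (w x)⁻¹ ∂μ) * ∫⁻ x, w x * f x ^ 2 ∂μ := by
  have hsplit (x : X) : f x = (w x)⁻¹ ^ (1 / 2 : ℝ) * (w x ^ (1 / 2 : ℝ) * f x) := by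
    rw [← mul_assoc, ← ENNReal.mul_rpow_of_nonneg _ _ (by norm_num),
      ENNReal.inv_mul_cancel (hw₀ x) (hw_top x), ENNReal.one_rpow, one_mul]
  calc (∫⁻ x, f x ∂μ) ^ 2
      = (∫⁻ x, (w x)⁻¹ ^ (1 / 2 : ℝ) * (w x ^ (1 / 2 : ℝ) * f x) ∂μ) ^ 2 := by
        simp only [← hsplit]
    _ ≤ _ := sq_lintegral_mul_le (by fun_prop) (by fun_prop)
    _ = _ := by simp only [mul_pow, sq_rpow_one_half]

variable {F : Type*} [NormedAddCommGroup F]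

theorem sq_eLpNorm_two (f : X → F) : eLpNorm f 2 μ ^ 2 = ∫⁻ x, ‖f x‖ₑ ^ 2 ∂μ := by
  simpa using eLpNorm_nnreal_pow_eq_lintegral (μ := μ) (f := f) (p := 2) two_ne_zero

theorem lintegral_enorm_sq_eq_ofReal {f : X → F} (hf : MemLp f 2 μ) :
    ∫⁻ x, ‖f x‖ₑ ^ 2 ∂μ = ENNReal.ofReal (∫ x, ‖f x‖ ^ 2 ∂μ) := by
  rw [ofReal_integral_eq_lintegral_ofReal (hf.integrable_norm_pow two_ne_zero)
    (.of_forall fun x ↦ by positivity)]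
  simp only [ENNReal.ofReal_pow (norm_nonneg _), ofReal_norm]

end CauchySchwarz

section Convolution

variable {G : Type*} [AddGroup G] [MeasurableSpace G] [MeasurableAdd₂ G] [MeasurableNeg G]
  {μ : Measure G} [SFinite μ] [μ.IsAddLeftInvariant]

theorem lintegral_lconvolution {f g : G → ℝ≥0∞}
    (hf : Measurable f) (hg : Measurable g) :
    ∫⁻ x, (f ⋆ₗ[μ] g) x ∂μ = (∫⁻ x, f x ∂μ) * ∫⁻ x, g x ∂μ := by
  calc ∫⁻ x, (f ⋆ₗ[μ] g) x ∂μ = ∫⁻ y, ∫⁻ x, f y * g (-y + x) ∂μ ∂μ := by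
        simp only [lconvolution_def]
        exact lintegral_lintegral_swap (by simp only [Function.uncurry_def]; fun_prop)
    _ = ∫⁻ y, f y * ∫⁻ x, g x ∂μ ∂μ := by
        refine lintegral_congr fun y ↦ ?_
        rw [lintegral_const_mul _ (by fun_prop), lintegral_add_left_eq_self g (-y)]
    _ = _ := lintegral_mul_const _ hf

theorem lintegral_lconvolution_sq_le
    {w₁ w₂ f g : G → ℝ≥0∞} {K : ℝ≥0∞} (hw₁ : Measurable w₁) (hw₂ : Measurable w₂)
    (hw₁₀ : ∀ x, w₁ x ≠ 0) (hw₂₀ : ∀ x, w₂ x ≠ 0) (hw₁_top : ∀ x, w₁ x ≠ ⊤)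
    (hw₂_top : ∀ x, w₂ x ≠ ⊤) (hf : Measurable f) (hg : Measurable g)
    (hK : ∀ x, ∫⁻ t, (w₁ t * w₂ (-t + x))⁻¹ ∂μ ≤ K) :
    ∫⁻ x, (f ⋆ₗ[μ] g) x ^ 2 ∂μ ≤
      K * ((∫⁻ x, w₁ x * f x ^ 2 ∂μ) * ∫⁻ x, w₂ x * g x ^ 2 ∂μ) := by
  set p := fun x ↦ w₁ x * f x ^ 2
  set q := fun x ↦ w₂ x * g x ^ 2
  have hp : Measurable p := by fun_prop
  have hq : Measurable q := by fun_prop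
  have hpointwise (x : G) : (f ⋆ₗ[μ] g) x ^ 2 ≤ K * (p ⋆ₗ[μ] q) x := by
    simp only [lconvolution_def]
    refine (sq_lintegral_le_lintegral_inv_mul (w := fun t ↦ w₁ t * w₂ (-t + x)) (by fun_prop)
      (fun t ↦ mul_ne_zero (hw₁₀ t) (hw₂₀ _)) (fun t ↦ ENNReal.mul_ne_top (hw₁_top t) (hw₂_top _))
      (by fun_prop)).trans (mul_le_mul' (hK x) (lintegral_mono fun t ↦ le_of_eq ?_))
    ring
  calc ∫⁻ x, (f ⋆ₗ[μ] g) x ^ 2 ∂μ ≤ ∫⁻ x, K * (p ⋆ₗ[μ] q) x ∂μ := lintegral_mono hpointwise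
    _ = K * ∫⁻ x, (p ⋆ₗ[μ] q) x ∂μ := lintegral_const_mul _ (measurable_lconvolution μ hp hq)
    _ = _ := by rw [lintegral_lconvolution hp hq]

end Convolution

open scoped FourierTransform SchwartzMap LineDeriv Convolution
open FourierTransform

section JapaneseBracket

variable {E : Type*} [NormedAddCommGroup E]

theorem ofReal_one_add_norm_sq (k : E) : ENNReal.ofReal (1 + ‖k‖ ^ 2) = 1 + ‖k‖ₑ ^ 2 := by
  rw [ENNReal.ofReal_add zero_le_one (by positivity), ENNReal.ofReal_one,
    ENNReal.ofReal_pow (norm_nonneg _), ofReal_norm]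

theorem enorm_sqrt_rpow_sq (k : E) (σ : ℝ) :
    ‖√(1 + ‖k‖ ^ 2) ^ σ‖ₑ ^ 2 = (1 + ‖k‖ₑ ^ 2) ^ σ := by
  have hreal : (√(1 + ‖k‖ ^ 2) ^ σ) ^ 2 = (1 + ‖k‖ ^ 2) ^ σ := by
    rw [Real.rpow_pow_comm (by positivity), Real.sq_sqrt (by positivity)]
  rw [Real.enorm_of_nonneg (by positivity), ← ENNReal.ofReal_pow (by positivity), hreal,
    ← ENNReal.ofReal_rpow_of_pos (by positivity), ofReal_one_add_norm_sq]

variable [InnerProductSpace ℝ E] [FiniteDimensional ℝ E] [MeasurableSpace E] [BorelSpace E]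

theorem lintegral_one_add_enorm_sq_rpow_neg_lt_top (μ : Measure E) [μ.IsAddHaarMeasure] {r : ℝ}
    (hr : Module.finrank ℝ E / 2 < r) : ∫⁻ x : E, (1 + ‖x‖ₑ ^ 2) ^ (-r) ∂μ < ⊤ := by
  have hint := integrable_rpow_neg_one_add_norm_sq (E := E) (μ := μ) (r := 2 * r) (by linarith)
  convert hint.lintegral_lt_top using 3 with x
  rw [← ENNReal.ofReal_rpow_of_pos (by positivity), ofReal_one_add_norm_sq]
  congr 1
  ring

variable {F : Type*} [NormedAddCommGroup F]

/-- The squared weighted norm `‖⟨x⟩ˢ v‖²` in `L²`, where `⟨x⟩² = 1 + ‖x‖²`; it is the squared norm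
of `𝓕 v` in the Bessel potential space `Hˢ`. It takes values in `[0, ∞]`, so that no decay of `v`
has to be assumed. -/
def bracketNormSq (s : ℝ) (v : E → F) : ℝ≥0∞ :=
  ∫⁻ x, (1 + ‖x‖ₑ ^ 2) ^ s * ‖v x‖ₑ ^ 2

theorem bracketNormSq_zero (v : E → F) : bracketNormSq 0 v = eLpNorm v 2 volume ^ 2 := by
  simp [bracketNormSq, sq_eLpNorm_two]

theorem bracketNormSq_one_half {v : E → F} (hv : Measurable fun k ↦ ‖v k‖)
    (h : ∫⁻ k, ENNReal.ofReal (√(1 + ‖k‖ ^ 2) * ‖v k‖ ^ 2) < ⊤) :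
    bracketNormSq (1 / 2) v = ENNReal.ofReal (∫ k, √(1 + ‖k‖ ^ 2) * ‖v k‖ ^ 2) := by
  have hnonneg : ∀ᵐ k : E, 0 ≤ √(1 + ‖k‖ ^ 2) * ‖v k‖ ^ 2 := .of_forall fun k ↦ by positivity
  rw [ofReal_integral_eq_lintegral_ofReal
    ((lintegral_ofReal_ne_top_iff_integrable (by fun_prop) hnonneg).1 h.ne) hnonneg]
  refine lintegral_congr fun k ↦ ?_
  rw [← ofReal_one_add_norm_sq, ENNReal.ofReal_rpow_of_pos (by positivity), ← Real.sqrt_eq_rpow,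
    ENNReal.ofReal_mul (by positivity), ENNReal.ofReal_pow (by positivity), ofReal_norm]

theorem bracketNormSq_mono {s : ℝ} {v w : E → F} (h : ∀ x, ‖v x‖ₑ ≤ ‖w x‖ₑ) :
    bracketNormSq s v ≤ bracketNormSq s w :=
  lintegral_mono fun x ↦ by gcongr; exact h x

theorem bracketNormSq_le_mul_add {r t : ℝ} (hr : 0 ≤ r) (hrt : r < t) {δ : ℝ≥0∞} (hδ : δ ≠ 0)
    (hδ_top : δ ≠ ⊤) {v : E → F} (hv : Measurable fun x ↦ ‖v x‖ₑ) :
    bracketNormSq r v ≤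
      δ * bracketNormSq t v + (δ⁻¹) ^ (r / (t - r)) * bracketNormSq 0 v := by
  simp only [bracketNormSq]
  rw [← lintegral_const_mul _ (by fun_prop), ← lintegral_const_mul _ (by fun_prop),
    ← lintegral_add_left (by fun_prop)]
  refine lintegral_mono fun x ↦ ?_
  rw [ENNReal.rpow_zero, one_mul, ← mul_assoc, ← add_mul]
  gcongr
  exact rpow_le_mul_rpow_add hr hrt hδ hδ_top _

theorem bracketNormSq_comp_smul_le {s : ℝ} (hs : 0 ≤ s) {c : ℝ} (hc : 1 ≤ |c|) (f : E → F) :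
    bracketNormSq s (fun x ↦ f (c • x)) ≤
      ENNReal.ofReal |(c ^ Module.finrank ℝ E)⁻¹| * bracketNormSq s f := by
  have hc₀ : c ≠ 0 := abs_pos.1 (one_pos.trans_le hc)
  have hweight (x : E) : ‖x‖ₑ ≤ ‖c • x‖ₑ := by
    rw [enorm_smul, Real.enorm_eq_ofReal_abs]
    exact le_mul_of_one_le_left' (ENNReal.one_le_ofReal.2 hc)
  calc bracketNormSq s (fun x ↦ f (c • x))
      ≤ ∫⁻ x : E, (1 + ‖c • x‖ₑ ^ 2) ^ s * ‖f (c • x)‖ₑ ^ 2 := by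
        unfold bracketNormSq
        gcongr with x
        exact hweight x
    _ = ∫⁻ x, (1 + ‖x‖ₑ ^ 2) ^ s * ‖f x‖ₑ ^ 2 ∂volume.map (c • ·) :=
        (lintegral_map_equiv (μ := volume) (fun x : E ↦ (1 + ‖x‖ₑ ^ 2) ^ s * ‖f x‖ₑ ^ 2)
          (MeasurableEquiv.smul₀ c hc₀)).symm
    _ = _ := by
        rw [Measure.map_addHaar_smul volume hc₀, lintegral_smul_measure, smul_eq_mul, bracketNormSq]

theorem bracketNormSq_const_smul [NormedSpace ℝ F] (s c : ℝ) (v : E → F) :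
    bracketNormSq s (fun x ↦ c • v x) = ‖c‖ₑ ^ 2 * bracketNormSq s v := by
  simp only [bracketNormSq, enorm_smul, mul_pow, mul_left_comm _ (‖c‖ₑ ^ 2)]
  exact lintegral_const_mul' _ _ (ENNReal.pow_ne_top enorm_ne_top)

theorem bracketNormSq_sqrt_rpow_smul [NormedSpace ℝ F] (s σ : ℝ) (v : E → F) :
    bracketNormSq s (fun k ↦ √(1 + ‖k‖ ^ 2) ^ σ • v k) = bracketNormSq (s + σ) v := by
  refine lintegral_congr fun k ↦ ?_
  rw [enorm_smul, mul_pow, enorm_sqrt_rpow_sq, ← mul_assoc,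
    ENNReal.rpow_add _ _ (by simp) (by finiteness)]

theorem integrable_sqrt_rpow_smul [NormedSpace ℝ F] {σ : ℝ} {v : E → F}
    (hv : AEStronglyMeasurable v)
    (h : ∫⁻ k, ENNReal.ofReal (√(1 + ‖k‖ ^ 2) ^ σ * ‖v k‖) < ⊤) :
    Integrable fun k ↦ √(1 + ‖k‖ ^ 2) ^ σ • v k := by
  have hweight : Measurable fun k : E ↦ √(1 + ‖k‖ ^ 2) ^ σ := by fun_prop
  refine ⟨hweight.aestronglyMeasurable.smul hv, ?_⟩
  simpa only [hasFiniteIntegral_iff_norm, norm_smul,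
    Real.norm_of_nonneg (Real.rpow_nonneg (Real.sqrt_nonneg _) σ)] using h

variable [NormedSpace ℂ F]

theorem enorm_convolution_lsmul_le (b : E → ℂ) (v : E → F) (x : E) :
    ‖(b ⋆[ContinuousLinearMap.lsmul ℂ ℂ, volume] v) x‖ₑ ≤
      ((fun t ↦ ‖b t‖ₑ) ⋆ₗ[volume] fun t ↦ ‖v t‖ₑ) x := by
  refine (enorm_integral_le_lintegral_enorm _).trans_eq (lintegral_congr fun t ↦ ?_)
  simp [enorm_smul, sub_eq_neg_add]

theorem lintegral_convolution_lsmul_sq_le {s t : ℝ} (hs : 0 ≤ s) (ht : 0 ≤ t) {b : E → ℂ}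
    (hb : Measurable b) {v : E → F} (hv : StronglyMeasurable v) :
    ∫⁻ x, ‖(b ⋆[ContinuousLinearMap.lsmul ℂ ℂ, volume] v) x‖ₑ ^ 2 ≤
      2 * (∫⁻ x : E, (1 + ‖x‖ₑ ^ 2) ^ (-(s + t))) * (bracketNormSq s b * bracketNormSq t v) := by
  set I := ∫⁻ x : E, (1 + ‖x‖ₑ ^ 2) ^ (-(s + t))
  have weight_ne_zero (r : ℝ) (x : E) : (1 + ‖x‖ₑ ^ 2) ^ r ≠ 0 := by
    simp [ENNReal.rpow_eq_zero_iff]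
  have weight_ne_top (r : ℝ) (x : E) : (1 + ‖x‖ₑ ^ 2) ^ r ≠ ⊤ := by
    simp [ENNReal.rpow_eq_top_iff]
  have hkernel (x : E) :
      ∫⁻ y, ((1 + ‖y‖ₑ ^ 2) ^ s * (1 + ‖-y + x‖ₑ ^ 2) ^ t)⁻¹ ≤ 2 * I := by
    calc _ ≤ ∫⁻ y, ((1 + ‖y‖ₑ ^ 2) ^ (-(s + t)) + (1 + ‖x - y‖ₑ ^ 2) ^ (-(s + t))) :=
          lintegral_mono fun y ↦ by
            simpa only [sub_eq_neg_add] using inv_rpow_mul_rpow_le _ _ hs ht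
      _ = I + I := by
          rw [lintegral_add_left (by fun_prop), lintegral_sub_left_eq_self
            (fun y : E ↦ (1 + ‖y‖ₑ ^ 2) ^ (-(s + t))) x]
      _ = 2 * I := (two_mul I).symm
  refine (lintegral_mono fun x ↦ pow_le_pow_left' (enorm_convolution_lsmul_le b v x) 2).trans ?_
  exact lintegral_lconvolution_sq_le (by fun_prop) (by fun_prop) (weight_ne_zero s)
    (weight_ne_zero t) (weight_ne_top s) (weight_ne_top t) (by fun_prop) hv.enorm hkernel

end JapaneseBracket

section Fourier

variable {E : Type*} [NormedAddCommGroup E] [InnerProductSpace ℝ E] [FiniteDimensional ℝ E]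
  [MeasurableSpace E] [BorelSpace E] {F : Type*} [NormedAddCommGroup F] [NormedSpace ℂ F]

theorem ae_eq_of_integral_schwartz_smul_eq [CompleteSpace F] {f g : E → F}
    (hf : LocallyIntegrable f) (hg : LocallyIntegrable g)
    (h : ∀ ψ : 𝓢(E, ℂ), ∫ x, ψ x • f x = ∫ x, ψ x • g x) : f =ᵐ[volume] g := by
  refine ae_eq_of_integral_contDiff_smul_eq hf hg fun ψ hsmooth hsupp ↦ ?_
  have hsupp' : HasCompactSupport (Complex.ofRealCLM ∘ ψ) := hsupp.comp_left rfl
  have hsmooth' : ContDiff ℝ ((⊤ : ℕ∞) : WithTop ℕ∞) (Complex.ofRealCLM ∘ ψ) := by fun_prop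
  simpa using h (hsupp'.toSchwartzMap hsmooth')

theorem continuous_fourier_of_integrable {f : E → F} (hf : Integrable f) :
    Continuous (𝓕 f) :=
  VectorFourier.fourierIntegral_continuous Real.continuous_fourierChar (L := innerₗ E)
    continuous_inner hf

theorem eLpNorm_fourier_smul_le (b : E → ℂ) (g : E → F) :
    eLpNorm (fun x ↦ 𝓕 b x • g x) 2 volume ≤
      ENNReal.ofReal (∫ x, ‖b x‖) * eLpNorm g 2 volume := by
  refine eLpNorm_le_mul_eLpNorm_of_ae_le_mul (.of_forall fun x ↦ ?_) 2
  rw [norm_smul]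
  gcongr
  exact VectorFourier.norm_fourierIntegral_le_integral_norm _ _ _ _ _

theorem integral_cexp_inner_smul_eq_fourier (f : E → F) (x : E) :
    ∫ k, Complex.exp (Complex.I * (inner ℝ k x : ℝ)) • f k =
      𝓕 (fun k ↦ (2 * Real.pi) ^ Module.finrank ℝ E • f ((-(2 * Real.pi)) • k)) x := by
  have hscale := Measure.integral_comp_smul (volume : Measure E)
    (fun k ↦ Complex.exp (Complex.I * (inner ℝ k x : ℝ)) • f k) (-(2 * Real.pi))
  have hpos : (0 : ℝ) < (2 * Real.pi) ^ Module.finrank ℝ E := by positivity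
  rw [abs_inv, abs_pow, abs_neg, abs_of_pos Real.two_pi_pos, eq_inv_smul_iff₀ hpos.ne',
    ← integral_smul] at hscale
  rw [← hscale, Real.fourier_eq']
  congr 1 with k
  rw [real_inner_smul_left, smul_comm]
  congr 2
  push_cast
  ring_nf

theorem continuous_integral_cexp_inner_smul {f : E → F} (hf : Integrable f) :
    Continuous fun x ↦ ∫ k, Complex.exp (Complex.I * (inner ℝ k x : ℝ)) • f k := by
  simp only [integral_cexp_inner_smul_eq_fourier]
  exact continuous_fourier_of_integrable
    ((hf.comp_smul (neg_ne_zero.2 Real.two_pi_pos.ne')).smul ((2 * Real.pi) ^ Module.finrank ℝ E))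

end Fourier

section Plancherel

variable {E : Type*} [NormedAddCommGroup E] [InnerProductSpace ℝ E] [FiniteDimensional ℝ E]
  [MeasurableSpace E] [BorelSpace E] {F : Type*} [NormedAddCommGroup F] [InnerProductSpace ℂ F]
  [CompleteSpace F]

theorem coeFn_fourier_toLp {f : E → F} (hf : Integrable f) (hf2 : MemLp f 2) :
    (𝓕 (hf2.toLp f) : Lp F 2 (volume : Measure E)) =ᵐ[volume] 𝓕 f := by
  refine ae_eq_of_integral_schwartz_smul_eq ((Lp.memLp _).locallyIntegrable one_le_two)
    (continuous_fourier_of_integrable hf).locallyIntegrable fun ψ ↦ ?_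
  have hpairing := congrArg (fun T : 𝓢'(E, F) ↦ T ψ)
    (Lp.fourier_toTemperedDistribution_eq (hf2.toLp f))
  simp only [TemperedDistribution.fourier_apply, Lp.toTemperedDistribution_apply] at hpairing
  calc ∫ x, ψ x • (𝓕 (hf2.toLp f) : Lp F 2 (volume : Measure E)) x
      = ∫ x, 𝓕 ψ x • hf2.toLp f x := hpairing.symm
    _ = ∫ x, 𝓕 (ψ : E → ℂ) x • f x := by
        rw [← SchwartzMap.fourier_coe]
        refine integral_congr_ae ?_
        filter_upwards [hf2.coeFn_toLp] with x hx
        rw [hx]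
    _ = ∫ x, ψ x • 𝓕 f x := by
        have := VectorFourier.integral_fourierIntegral_smul_eq_flip (𝕜 := ℝ) (L := innerₗ E)
          (μ := (volume : Measure E)) (ν := (volume : Measure E)) (f := (ψ : E → ℂ)) (g := f)
          Real.continuous_fourierChar continuous_inner ψ.integrable hf
        rwa [flip_innerₗ] at this

theorem eLpNorm_coeFn_fourier (U : Lp F 2 (volume : Measure E)) :
    eLpNorm (𝓕 U : Lp F 2 (volume : Measure E)) 2 volume = eLpNorm U 2 volume := by
  have := congrArg ENNReal.ofReal (Lp.norm_fourier_eq U)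
  simpa only [ofReal_norm, Lp.enorm_def] using this

/-- The squared norm of the Bessel potential space `Hˢ` of an `L²` function, computed on its inverse
Fourier transform; with Mathlib's convention `𝓕 u ξ = ∫ exp (-2πi⟨x, ξ⟩) u x` the weight at
frequency `ξ` is `⟨ξ⟩ˢ` and not `⟨2πξ⟩ˢ`. -/
def sobolevNormSq (s : ℝ) (U : Lp F 2 (volume : Measure E)) : ℝ≥0∞ :=
  bracketNormSq s (𝓕⁻ U : Lp F 2 (volume : Measure E))

theorem sobolevNormSq_zero (U : Lp F 2 (volume : Measure E)) :
    sobolevNormSq 0 U = eLpNorm U 2 volume ^ 2 := by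
  rw [sobolevNormSq, bracketNormSq_zero, ← eLpNorm_coeFn_fourier, fourier_fourierInv_eq]

theorem sobolevNormSq_le_mul_add {r t : ℝ} (hr : 0 ≤ r) (hrt : r < t) {δ : ℝ≥0∞} (hδ : δ ≠ 0)
    (hδ_top : δ ≠ ⊤) (U : Lp F 2 (volume : Measure E)) :
    sobolevNormSq r U ≤ δ * sobolevNormSq t U + (δ⁻¹) ^ (r / (t - r)) * sobolevNormSq 0 U :=
  bracketNormSq_le_mul_add hr hrt hδ hδ_top (Lp.stronglyMeasurable _).enorm

theorem lineDerivOp_toLp_eq_toLp_fderiv {u : E → F} {m : E} (hd : Differentiable ℝ u)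
    (hu : MemLp u 2) (hu' : MemLp (fun x ↦ fderiv ℝ u x m) 2) :
    ∂_{m} ((hu.toLp u : Lp F 2 (volume : Measure E)) : 𝓢'(E, F)) =
      ((hu'.toLp _ : Lp F 2 (volume : Measure E)) : 𝓢'(E, F)) := by
  ext ψ
  have hψ : MemLp ψ 2 (volume : Measure E) := ψ.memLp 2
  have hψ' : MemLp (fun x ↦ fderiv ℝ ψ x m) 2 (volume : Measure E) := by
    simpa only [← SchwartzMap.lineDerivOp_apply_eq_fderiv] using (∂_{m} ψ).memLp 2
  simp only [TemperedDistribution.lineDerivOp_apply_apply, Lp.toTemperedDistribution_apply]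
  calc ∫ x, (-∂_{m} ψ) x • hu.toLp u x = -∫ x, fderiv ℝ ψ x m • u x := by
        rw [← integral_neg]
        refine integral_congr_ae ?_
        filter_upwards [hu.coeFn_toLp] with x hx
        simp [hx, SchwartzMap.lineDerivOp_apply_eq_fderiv]
    _ = ∫ x, ψ x • fderiv ℝ u x m :=
        (integral_smul_fderiv_eq_neg_fderiv_smul_of_integrable
          (memLp_one_iff_integrable.1 (hu.smul hψ')) (memLp_one_iff_integrable.1 (hu'.smul hψ))
          (memLp_one_iff_integrable.1 (hu.smul hψ)) (fun x _ ↦ ψ.differentiable x)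
          fun x _ ↦ hd x).symm
    _ = ∫ x, ψ x • hu'.toLp _ x := by
        refine integral_congr_ae ?_
        filter_upwards [hu'.coeFn_toLp] with x hx
        rw [hx]

theorem coeFn_fourierInv_of_lineDerivOp_eq {U U' : Lp F 2 (volume : Measure E)} {m : E}
    (h : ∂_{m} (U : 𝓢'(E, F)) = (U' : 𝓢'(E, F))) :
    (𝓕⁻ U' : Lp F 2 (volume : Measure E)) =ᵐ[volume] fun x ↦
      (-(2 * Real.pi * Complex.I) * (inner ℝ x m : ℝ)) •
        (𝓕⁻ U : Lp F 2 (volume : Measure E)) x := by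
  set V : Lp F 2 (volume : Measure E) := 𝓕⁻ U
  have loc_int (W : Lp F 2 (volume : Measure E)) : LocallyIntegrable W :=
    (Lp.memLp W).locallyIntegrable one_le_two
  refine ae_eq_of_integral_schwartz_smul_eq (loc_int _)
    ((loc_int V).continuous_smul (by fun_prop)) fun ψ ↦ ?_
  have hgrowth : (fun x : E ↦ ((inner ℝ x m : ℝ) : ℂ)).HasTemperateGrowth := by fun_prop
  have hpairing := congrArg (fun T : 𝓢'(E, F) ↦ (𝓕⁻ T) ψ) h
  simp only [TemperedDistribution.fourierInv_lineDerivOp_eq,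
    Lp.fourierInv_toTemperedDistribution_eq] at hpairing
  calc _ = -(2 * Real.pi * Complex.I) •
        ∫ x, SchwartzMap.smulLeftCLM ℂ (fun x : E ↦ ((inner ℝ x m : ℝ) : ℂ)) ψ x • V x := by
        simpa using hpairing.symm
    _ = _ := by
        rw [← integral_smul]
        simp only [SchwartzMap.smulLeftCLM_apply_apply hgrowth, smul_smul, smul_eq_mul]
        refine integral_congr_ae (.of_forall fun x ↦ ?_)
        ring_nf

theorem lintegral_enorm_inner_mul_fourierInv_sq {u : E → F} (hd : Differentiable ℝ u)
    (hu : MemLp u 2) {m : E} (hu' : MemLp (fun x ↦ fderiv ℝ u x m) 2) :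
    ‖2 * Real.pi‖ₑ ^ 2 * ∫⁻ x, ‖(inner ℝ x m : ℝ)‖ₑ ^ 2 *
      ‖(𝓕⁻ (hu.toLp u) : Lp F 2 (volume : Measure E)) x‖ₑ ^ 2 =
      ∫⁻ x, ‖fderiv ℝ u x m‖ₑ ^ 2 := by
  set V : Lp F 2 (volume : Measure E) := 𝓕⁻ (hu.toLp u)
  set V' : Lp F 2 (volume : Measure E) := 𝓕⁻ (hu'.toLp _) with hV'
  have hVV' := coeFn_fourierInv_of_lineDerivOp_eq (lineDerivOp_toLp_eq_toLp_fderiv hd hu hu')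
  calc _ = ∫⁻ x, ‖V' x‖ₑ ^ 2 := by
        rw [← lintegral_const_mul' _ _ (ENNReal.pow_ne_top enorm_ne_top)]
        refine lintegral_congr_ae ?_
        filter_upwards [hVV'] with x hx
        have henorm : ‖-(2 * Real.pi * Complex.I) * (inner ℝ x m : ℝ)‖ₑ =
            ‖2 * Real.pi‖ₑ * ‖(inner ℝ x m : ℝ)‖ₑ := by
          rw [← enorm_norm, ← enorm_mul, ← enorm_norm (_ * _ : ℝ)]
          simp
        rw [hx, enorm_smul, henorm, mul_pow, mul_pow, mul_assoc]
    _ = ∫⁻ x, ‖fderiv ℝ u x m‖ₑ ^ 2 := by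
        rw [← sq_eLpNorm_two, ← sq_eLpNorm_two, ← eLpNorm_coeFn_fourier, hV',
          fourier_fourierInv_eq, eLpNorm_congr_ae hu'.coeFn_toLp]

theorem lintegral_enorm_sq_mul_fourierInv_sq_le {u : E → F} (hd : Differentiable ℝ u)
    (hu : MemLp u 2) (hu' : MemLp (fderiv ℝ u) 2) :
    ‖2 * Real.pi‖ₑ ^ 2 * ∫⁻ x, ‖x‖ₑ ^ 2 *
      ‖(𝓕⁻ (hu.toLp u) : Lp F 2 (volume : Measure E)) x‖ₑ ^ 2 ≤
      Module.finrank ℝ E * ∫⁻ x, ‖fderiv ℝ u x‖ₑ ^ 2 := by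
  set V : Lp F 2 (volume : Measure E) := 𝓕⁻ (hu.toLp u)
  set e := stdOrthonormalBasis ℝ E
  have enorm_fderiv_le (i) (x : E) : ‖fderiv ℝ u x (e i)‖ₑ ≤ ‖fderiv ℝ u x‖ₑ := by
    simpa [e.enorm_eq_one] using (fderiv ℝ u x).le_opENorm (e i)
  have hui (i) : MemLp (fun x ↦ fderiv ℝ u x (e i)) 2 :=
    hu'.mono (hu'.1.apply_continuousLinearMap (e i))
      (.of_forall fun x ↦ enorm_le_iff_norm_le.1 (enorm_fderiv_le i x))
  have parseval (x : E) : ‖x‖ₑ ^ 2 = ∑ i, ‖(inner ℝ x (e i) : ℝ)‖ₑ ^ 2 := by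
    simp only [← ofReal_norm, ← ENNReal.ofReal_pow (norm_nonneg _)]
    rw [← ENNReal.ofReal_sum_of_nonneg fun i _ ↦ by positivity, e.sum_sq_norm_inner_left x]
  calc _ = ∑ i, ‖2 * Real.pi‖ₑ ^ 2 * ∫⁻ x, ‖(inner ℝ x (e i) : ℝ)‖ₑ ^ 2 * ‖V x‖ₑ ^ 2 := by
        simp only [parseval, Finset.sum_mul, ← Finset.mul_sum]
        rw [lintegral_finsetSum _ fun i _ ↦ by fun_prop]
    _ = ∑ i, ∫⁻ x, ‖fderiv ℝ u x (e i)‖ₑ ^ 2 :=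
        Finset.sum_congr rfl fun i _ ↦ lintegral_enorm_inner_mul_fourierInv_sq hd hu (hui i)
    _ ≤ ∑ _i : Fin (Module.finrank ℝ E), ∫⁻ x, ‖fderiv ℝ u x‖ₑ ^ 2 :=
        Finset.sum_le_sum fun i _ ↦ lintegral_mono fun x ↦ by gcongr; exact enorm_fderiv_le i x
    _ = _ := by simp

theorem sobolevNormSq_one_le {u : E → F} (hd : Differentiable ℝ u) (hu : MemLp u 2)
    (hu' : MemLp (fderiv ℝ u) 2) :
    sobolevNormSq 1 (hu.toLp u) ≤ (∫⁻ x, ‖u x‖ₑ ^ 2) +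
      Module.finrank ℝ E / ‖2 * Real.pi‖ₑ ^ 2 * ∫⁻ x, ‖fderiv ℝ u x‖ₑ ^ 2 := by
  set V : Lp F 2 (volume : Measure E) := 𝓕⁻ (hu.toLp u) with hV
  have hmass : ∫⁻ x, ‖V x‖ₑ ^ 2 = ∫⁻ x, ‖u x‖ₑ ^ 2 := by
    rw [← sq_eLpNorm_two, ← eLpNorm_coeFn_fourier, hV, fourier_fourierInv_eq,
      eLpNorm_congr_ae hu.coeFn_toLp, sq_eLpNorm_two]
  calc sobolevNormSq 1 (hu.toLp u) = ∫⁻ x, (‖V x‖ₑ ^ 2 + ‖x‖ₑ ^ 2 * ‖V x‖ₑ ^ 2) := by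
        simp only [sobolevNormSq, bracketNormSq, ENNReal.rpow_one, add_mul, one_mul, V]
    _ = (∫⁻ x, ‖u x‖ₑ ^ 2) + ∫⁻ x, ‖x‖ₑ ^ 2 * ‖V x‖ₑ ^ 2 := by
        rw [lintegral_add_left (by fun_prop), hmass]
    _ ≤ _ := by
        gcongr
        rw [ENNReal.mul_comm_div, ← mul_div_assoc, ENNReal.le_div_iff_mul_le
          (.inl (by simp)) (.inl (ENNReal.pow_ne_top enorm_ne_top)), mul_comm]
        exact lintegral_enorm_sq_mul_fourierInv_sq_le hd hu hu'

end Plancherel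

section Multiplication

variable {E : Type*} [NormedAddCommGroup E] [InnerProductSpace ℝ E] [FiniteDimensional ℝ E]
  [MeasurableSpace E] [BorelSpace E] {F : Type*} [NormedAddCommGroup F]

theorem exists_integrable_enorm_le_eLpNorm_sub_lt {f : E → F} (hf : StronglyMeasurable f)
    (hf2 : MemLp f 2) {η : ℝ≥0∞} (hη : η ≠ 0) :
    ∃ g : E → F, StronglyMeasurable g ∧ Integrable g ∧ (∀ x, ‖g x‖ₑ ≤ ‖f x‖ₑ) ∧
      eLpNorm (f - g) 2 volume < η := by
  obtain ⟨S, hS, hS_fin, htail⟩ := hf2.exists_eLpNorm_indicator_compl_lt ENNReal.ofNat_ne_top hη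
  have : IsFiniteMeasure (volume.restrict S) := ⟨by simpa using hS_fin⟩
  refine ⟨S.indicator f, hf.indicator hS, ?_, fun x ↦ enorm_indicator_le_enorm_self _ _, ?_⟩
  · exact (integrable_indicator_iff hS).2 ((hf2.restrict S).integrable one_le_two)
  · rwa [← Set.indicator_compl]

variable [InnerProductSpace ℂ F] [CompleteSpace F]

theorem sq_eLpNorm_fourier_smul_fourier_le {s t : ℝ} (hs : 0 ≤ s) (ht : 0 ≤ t) {b : E → ℂ}
    (hb : Measurable b) (hbi : Integrable b) {v : E → F} (hv : StronglyMeasurable v)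
    (hvi : Integrable v) :
    eLpNorm (fun x ↦ 𝓕 b x • 𝓕 v x) 2 volume ^ 2 ≤
      2 * (∫⁻ x : E, (1 + ‖x‖ₑ ^ 2) ^ (-(s + t))) * (bracketNormSq s b * bracketNormSq t v) := by
  have hconv := lintegral_convolution_lsmul_sq_le hs ht hb hv
  rw [← sq_eLpNorm_two] at hconv
  set c := b ⋆[ContinuousLinearMap.lsmul ℂ ℂ, volume] v
  have hc : Integrable c := hbi.integrable_convolution _ hvi
  refine le_trans ?_ hconv
  rcases eq_or_ne (eLpNorm c 2 volume) ⊤ with htop | hfin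
  · simp [htop]
  have hc2 : MemLp c 2 := ⟨hc.aestronglyMeasurable, hfin.lt_top⟩
  have hprod : (fun x ↦ 𝓕 b x • 𝓕 v x) = 𝓕 c :=
    funext fun x ↦ (Real.fourier_smul_convolution_eq hbi hvi x).symm
  rw [hprod, ← eLpNorm_congr_ae (coeFn_fourier_toLp hc hc2), eLpNorm_coeFn_fourier,
    eLpNorm_congr_ae hc2.coeFn_toLp]

theorem exists_integrable_eLpNorm_sub_fourier_lt (U : Lp F 2 (volume : Measure E)) {η : ℝ≥0∞}
    (hη : η ≠ 0) :
    ∃ v : E → F, StronglyMeasurable v ∧ Integrable v ∧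
      (∀ s, bracketNormSq s v ≤ sobolevNormSq s U) ∧ eLpNorm (⇑U - 𝓕 v) 2 volume < η := by
  set V : Lp F 2 (volume : Measure E) := 𝓕⁻ U with hV
  obtain ⟨v, hv, hvi, hvV, hclose⟩ :=
    exists_integrable_enorm_le_eLpNorm_sub_lt (Lp.stronglyMeasurable V) (Lp.memLp V) hη
  refine ⟨v, hv, hvi, fun s ↦ bracketNormSq_mono hvV, ?_⟩
  have hv2 : MemLp v 2 := (Lp.memLp V).mono hv.aestronglyMeasurable
    (.of_forall fun x ↦ enorm_le_iff_norm_le.1 (hvV x))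
  have hU : 𝓕 (V - hv2.toLp v) = U - 𝓕 (hv2.toLp v) := by
    calc 𝓕 (V - hv2.toLp v) = 𝓕 V - 𝓕 (hv2.toLp v) := (Lp.fourierTransformₗᵢ E F).map_sub _ _
      _ = _ := by rw [hV, fourier_fourierInv_eq]
  calc eLpNorm (⇑U - 𝓕 v) 2 volume
      = eLpNorm (𝓕 (V - hv2.toLp v) : Lp F 2 (volume : Measure E)) 2 volume := by
        rw [hU]
        exact eLpNorm_congr_ae (((Lp.coeFn_sub _ _).trans
          (.sub .rfl (coeFn_fourier_toLp hvi hv2))).symm)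
    _ = eLpNorm (⇑V - v) 2 volume := by
        rw [eLpNorm_coeFn_fourier]
        exact eLpNorm_congr_ae ((Lp.coeFn_sub _ _).trans (.sub .rfl hv2.coeFn_toLp))
    _ < η := hclose

theorem sq_eLpNorm_fourier_smul_le {s t : ℝ} (hs : 0 ≤ s) (ht : 0 ≤ t) {b : E → ℂ}
    (hb : Measurable b) (hbi : Integrable b) (U : Lp F 2 (volume : Measure E)) :
    eLpNorm (fun x ↦ 𝓕 b x • U x) 2 volume ^ 2 ≤
      2 * (∫⁻ x : E, (1 + ‖x‖ₑ ^ 2) ^ (-(s + t))) * (bracketNormSq s b * sobolevNormSq t U) := by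
  set I := ∫⁻ x : E, (1 + ‖x‖ₑ ^ 2) ^ (-(s + t))
  set R := 2 * I * (bracketNormSq s b * sobolevNormSq t U) with hR
  set M := ENNReal.ofReal (∫ x, ‖b x‖)
  have hb𝓕 := (continuous_fourier_of_integrable hbi).aestronglyMeasurable (μ := volume)
  have happrox (η : ℝ≥0∞) (hη : η ≠ 0) :
      eLpNorm (fun x ↦ 𝓕 b x • U x) 2 volume ≤ R ^ (1 / 2 : ℝ) + M * η := by
    obtain ⟨v, hv, hvi, hvU, hclose⟩ := exists_integrable_eLpNorm_sub_fourier_lt U hη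
    have hv𝓕 := (continuous_fourier_of_integrable hvi).aestronglyMeasurable (μ := volume)
    have hmain : eLpNorm (fun x ↦ 𝓕 b x • 𝓕 v x) 2 volume ≤ R ^ (1 / 2 : ℝ) := by
      refine (ENNReal.pow_le_pow_left_iff two_ne_zero).1 ?_
      rw [sq_rpow_one_half, hR]
      refine (sq_eLpNorm_fourier_smul_fourier_le hs ht hb hbi hv hvi).trans ?_
      gcongr
      exact hvU t
    calc eLpNorm (fun x ↦ 𝓕 b x • U x) 2 volume
        = eLpNorm ((fun x ↦ 𝓕 b x • 𝓕 v x) + fun x ↦ 𝓕 b x • (⇑U - 𝓕 v) x) 2 volume := by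
          congr 1
          ext x
          simp only [Pi.add_apply, Pi.sub_apply, ← smul_add, add_sub_cancel]
      _ ≤ _ := eLpNorm_add_le (hb𝓕.smul hv𝓕)
          (hb𝓕.smul ((Lp.aestronglyMeasurable U).sub hv𝓕)) one_le_two
      _ ≤ _ := add_le_add hmain ((eLpNorm_fourier_smul_le b _).trans (by gcongr))
  have hlim : Filter.Tendsto (fun η ↦ R ^ (1 / 2 : ℝ) + M * η) (nhdsWithin 0 (Set.Ioi 0))
      (nhds (R ^ (1 / 2 : ℝ) + M * 0)) :=
    (tendsto_const_nhds.add (ENNReal.Tendsto.const_mul Filter.tendsto_id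
      (.inr ENNReal.ofReal_ne_top))).mono_left nhdsWithin_le_nhds
  have hle := ge_of_tendsto hlim
    (eventually_mem_nhdsWithin.mono fun η hη ↦ happrox η (ne_of_gt hη))
  rw [mul_zero, add_zero] at hle
  simpa only [sq_rpow_one_half] using pow_le_pow_left' hle 2

theorem exists_sq_eLpNorm_fourier_smul_le {s t : ℝ} (hs : 0 ≤ s) (ht : 0 < t)
    (hst : Module.finrank ℝ E / 2 < s + t) {δ : ℝ≥0∞} (hδ : δ ≠ 0) :
    ∃ C : ℝ≥0∞, C ≠ ⊤ ∧ ∀ {b : E → ℂ}, Measurable b → Integrable b →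
      ∀ U : Lp F 2 (volume : Measure E), eLpNorm (fun x ↦ 𝓕 b x • U x) 2 volume ^ 2 ≤
        bracketNormSq s b * (δ * sobolevNormSq t U + C * eLpNorm U 2 volume ^ 2) := by
  obtain ⟨r, hr, hrt⟩ : ∃ r, max 0 (Module.finrank ℝ E / 2 - s) < r ∧ r < t :=
    exists_between (max_lt ht (by linarith))
  obtain ⟨hr₀, hsr⟩ := max_lt_iff.1 hr
  set K : ℝ≥0∞ := 2 * ∫⁻ x : E, (1 + ‖x‖ₑ ^ 2) ^ (-(s + r))
  have hK_top : K ≠ ⊤ := ENNReal.mul_ne_top ENNReal.ofNat_ne_top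
    (lintegral_one_add_enorm_sq_rpow_neg_lt_top volume (by linarith)).ne
  obtain ⟨η, hη₀, hη_top, hη⟩ : ∃ η : ℝ≥0∞, η ≠ 0 ∧ η ≠ ⊤ ∧ K * η ≤ δ := by
    obtain ⟨η, hη₀, hη⟩ := ENNReal.exists_nnreal_pos_mul_lt hK_top hδ
    exact ⟨η, by simpa using hη₀.ne', ENNReal.coe_ne_top, by rw [mul_comm]; exact hη.le⟩
  refine ⟨K * (η⁻¹) ^ (r / (t - r)), ENNReal.mul_ne_top hK_top <|
    ENNReal.rpow_ne_top_of_nonneg (div_nonneg hr₀.le (sub_nonneg.2 hrt.le))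
      (ENNReal.inv_ne_top.2 hη₀), fun {b} hb hbi U ↦ ?_⟩
  calc eLpNorm (fun x ↦ 𝓕 b x • U x) 2 volume ^ 2
      ≤ K * (bracketNormSq s b * sobolevNormSq r U) :=
        sq_eLpNorm_fourier_smul_le hs hr₀.le hb hbi U
    _ ≤ K * (bracketNormSq s b *
          (η * sobolevNormSq t U + (η⁻¹) ^ (r / (t - r)) * eLpNorm U 2 volume ^ 2)) := by
        gcongr
        rw [← sobolevNormSq_zero]
        exact sobolevNormSq_le_mul_add hr₀.le hrt hη₀ hη_top U
    _ = bracketNormSq s b * (K * η * sobolevNormSq t U +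
          K * (η⁻¹) ^ (r / (t - r)) * eLpNorm U 2 volume ^ 2) := by ring
    _ ≤ _ := by gcongr

theorem exists_sq_eLpNorm_fourier_smul_le_of_differentiable {s : ℝ} (hs : 0 ≤ s)
    (hsd : Module.finrank ℝ E / 2 < s + 1) {δ : ℝ≥0∞} (hδ : δ ≠ 0) :
    ∃ C : ℝ≥0∞, C ≠ ⊤ ∧ ∀ {b : E → ℂ} {u : E → F}, Measurable b → Integrable b →
      Differentiable ℝ u → MemLp u 2 → MemLp (fderiv ℝ u) 2 →
      eLpNorm (fun x ↦ 𝓕 b x • u x) 2 volume ^ 2 ≤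
        bracketNormSq s b * (δ * ((∫⁻ x, ‖u x‖ₑ ^ 2) + ∫⁻ x, ‖fderiv ℝ u x‖ₑ ^ 2) +
          C * ∫⁻ x, ‖u x‖ₑ ^ 2) := by
  set D : ℝ≥0∞ := Module.finrank ℝ E / ‖2 * Real.pi‖ₑ ^ 2
  have hD : 1 + D ≠ ⊤ :=
    ENNReal.add_ne_top.2 ⟨ENNReal.one_ne_top, ENNReal.div_ne_top (by finiteness) (by simp)⟩
  obtain ⟨η, hη₀, hη⟩ := ENNReal.exists_nnreal_pos_mul_lt hD hδ
  obtain ⟨C, hC, hbound⟩ := exists_sq_eLpNorm_fourier_smul_le (E := E) (F := F) hs one_pos hsd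
    (ENNReal.coe_ne_zero.2 hη₀.ne')
  refine ⟨C, hC, fun {b u} hb hbi hd hu hu' ↦ ?_⟩
  have hsobolev : sobolevNormSq 1 (hu.toLp u) ≤
      (1 + D) * ((∫⁻ x, ‖u x‖ₑ ^ 2) + ∫⁻ x, ‖fderiv ℝ u x‖ₑ ^ 2) := by
    refine (sobolevNormSq_one_le hd hu hu').trans ?_
    rw [mul_add]
    gcongr
    · exact le_mul_of_one_le_left' le_self_add
    · exact le_add_self
  calc eLpNorm (fun x ↦ 𝓕 b x • u x) 2 volume ^ 2
      = eLpNorm (fun x ↦ 𝓕 b x • hu.toLp u x) 2 volume ^ 2 := by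
        congr 1
        exact eLpNorm_congr_ae (.smul .rfl hu.coeFn_toLp.symm)
    _ ≤ bracketNormSq s b * (η * sobolevNormSq 1 (hu.toLp u) +
          C * eLpNorm (hu.toLp u) 2 volume ^ 2) := hbound hb hbi _
    _ ≤ _ := by
        rw [eLpNorm_congr_ae hu.coeFn_toLp, sq_eLpNorm_two]
        gcongr bracketNormSq s b * (?_ + _)
        refine (mul_le_mul_right hsobolev _).trans ?_
        rw [← mul_assoc]
        exact mul_le_mul_left hη.le _

theorem exists_sq_eLpNorm_integral_cexp_smul_smul_le {s : ℝ} (hs : 0 ≤ s)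
    (hsd : Module.finrank ℝ E / 2 < s + 1) {δ : ℝ≥0∞} (hδ : δ ≠ 0) :
    ∃ C : ℝ≥0∞, C ≠ ⊤ ∧ ∀ {f : E → ℂ} {u : E → F}, Measurable f → Integrable f →
      Differentiable ℝ u → MemLp u 2 → MemLp (fderiv ℝ u) 2 →
      eLpNorm (fun x ↦ (∫ k, Complex.exp (Complex.I * (inner ℝ k x : ℝ)) • f k) • u x) 2
          volume ^ 2 ≤
        bracketNormSq s f * (δ * ((∫⁻ x, ‖u x‖ₑ ^ 2) + ∫⁻ x, ‖fderiv ℝ u x‖ₑ ^ 2) +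
          C * ∫⁻ x, ‖u x‖ₑ ^ 2) := by
  set A : ℝ≥0∞ := ‖(2 * Real.pi) ^ Module.finrank ℝ E‖ₑ ^ 2 *
    ENNReal.ofReal |((-(2 * Real.pi)) ^ Module.finrank ℝ E)⁻¹|
  have hA : A ≠ ⊤ := by finiteness
  obtain ⟨η, hη₀, hη⟩ := ENNReal.exists_nnreal_pos_mul_lt hA hδ
  obtain ⟨C, hC, hbound⟩ := exists_sq_eLpNorm_fourier_smul_le_of_differentiable (E := E) (F := F)
    hs hsd (ENNReal.coe_ne_zero.2 hη₀.ne')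
  refine ⟨A * C, ENNReal.mul_ne_top hA hC, fun {f u} hf hfi hd hu hu' ↦ ?_⟩
  simp only [integral_cexp_inner_smul_eq_fourier]
  set b : E → ℂ := fun k ↦ (2 * Real.pi) ^ Module.finrank ℝ E • f ((-(2 * Real.pi)) • k) with hb
  have hbi : Integrable b := (hfi.comp_smul (neg_ne_zero.2 Real.two_pi_pos.ne')).smul
    ((2 * Real.pi) ^ Module.finrank ℝ E)
  have hbf : bracketNormSq s b ≤ A * bracketNormSq s f := by
    rw [hb, bracketNormSq_const_smul, mul_assoc]
    gcongr
    refine bracketNormSq_comp_smul_le hs ?_ f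
    rw [abs_neg, abs_of_pos Real.two_pi_pos]
    linarith [Real.pi_gt_three]
  set H := (∫⁻ x, ‖u x‖ₑ ^ 2) + ∫⁻ x, ‖fderiv ℝ u x‖ₑ ^ 2
  calc eLpNorm (fun x ↦ 𝓕 b x • u x) 2 volume ^ 2
      ≤ bracketNormSq s b * (η * H + C * ∫⁻ x, ‖u x‖ₑ ^ 2) :=
        hbound (by fun_prop) hbi hd hu hu'
    _ ≤ A * bracketNormSq s f * (η * H + C * ∫⁻ x, ‖u x‖ₑ ^ 2) := by gcongr
    _ = bracketNormSq s f * (η * A * H + A * C * ∫⁻ x, ‖u x‖ₑ ^ 2) := by ring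
    _ ≤ _ := by gcongr

theorem exists_eLpNorm_integral_cexp_smul_smul_le {s : ℝ} (hs : 0 ≤ s)
    (hsd : Module.finrank ℝ E / 2 < s + 1) {ε : ℝ≥0∞} (hε : ε ≠ 0) (hε_top : ε ≠ ⊤) :
    ∃ C > (0 : ℝ), ∀ {f : E → ℂ} {u : E → F}, Measurable f → Integrable f →
      Differentiable ℝ u → MemLp u 2 → MemLp (fderiv ℝ u) 2 →
      eLpNorm (fun x ↦ (∫ k, Complex.exp (Complex.I * (inner ℝ k x : ℝ)) • f k) • u x) 2 volume ≤
        ε * ((∫⁻ x, ‖u x‖ₑ ^ 2) + (∫⁻ x, ‖fderiv ℝ u x‖ₑ ^ 2) + bracketNormSq s f) +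
          ENNReal.ofReal C * ∫⁻ x, ‖u x‖ₑ ^ 2 := by
  obtain ⟨C₀, hC₀, hbound⟩ := exists_sq_eLpNorm_integral_cexp_smul_smul_le (E := E) (F := F) hs hsd
    (δ := ε ^ 2) (pow_ne_zero 2 hε)
  obtain ⟨C, hC, hCle⟩ : ∃ C > (0 : ℝ), ε⁻¹ * C₀ ≤ ENNReal.ofReal C := by
    have hfin : ε⁻¹ * C₀ ≠ ⊤ := ENNReal.mul_ne_top (ENNReal.inv_ne_top.2 hε) hC₀
    exact ⟨(ε⁻¹ * C₀).toReal + 1, by positivity,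
      (ENNReal.le_ofReal_iff_toReal_le hfin (by positivity)).2 (le_add_of_nonneg_right zero_le_one)⟩
  refine ⟨C, hC, fun {f u} hf hfi hd hu hu' ↦ ?_⟩
  set B := bracketNormSq s f
  set H := (∫⁻ x, ‖u x‖ₑ ^ 2) + ∫⁻ x, ‖fderiv ℝ u x‖ₑ ^ 2
  have hsplit : B * (ε ^ 2 * H + C₀ * ∫⁻ x, ‖u x‖ₑ ^ 2) =
      (ε * B) * (ε * H + ε⁻¹ * C₀ * ∫⁻ x, ‖u x‖ₑ ^ 2) := by
    calc _ = (ε * B) * (ε * H) + (ε * ε⁻¹) * (B * (C₀ * ∫⁻ x, ‖u x‖ₑ ^ 2)) := by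
          rw [ENNReal.mul_inv_cancel hε hε_top]
          ring
      _ = _ := by ring
  calc _ ≤ ε * B + (ε * H + ε⁻¹ * C₀ * ∫⁻ x, ‖u x‖ₑ ^ 2) :=
        le_add_of_sq_le_mul ((hbound hf hfi hd hu hu').trans_eq hsplit)
    _ = ε * (H + B) + ε⁻¹ * C₀ * ∫⁻ x, ‖u x‖ₑ ^ 2 := by ring
    _ ≤ _ := by gcongr

theorem G_alpha_u_bound_general {σ : ℝ} (hσ : σ ≤ 1 / 2) (hσd : Module.finrank ℝ E + 2 * σ < 3)
    {ε : ℝ} (hε : 0 < ε) :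
    ∃ C > 0, ∀ (u : E → F) (α : E → ℂ),
      Differentiable ℝ u → MemLp u 2 volume → MemLp (fun x => fderiv ℝ u x) 2 volume →
      Measurable α → (∫⁻ k, ENNReal.ofReal (√(1 + ‖k‖ ^ 2) * ‖α k‖ ^ 2) < ⊤) →
      (∫⁻ k, ENNReal.ofReal (√(1 + ‖k‖ ^ 2) ^ σ * ‖α k‖) < ⊤) →
      MemLp (fun x =>
          (∫ k, ((√(1 + ‖k‖ ^ 2) ^ σ : ℝ) : ℂ) *
            Complex.exp (Complex.I * ((inner ℝ k x : ℝ) : ℂ)) * α k) • u x) 2 volume ∧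
      eLpNorm (fun x =>
          (∫ k, ((√(1 + ‖k‖ ^ 2) ^ σ : ℝ) : ℂ) *
            Complex.exp (Complex.I * ((inner ℝ k x : ℝ) : ℂ)) * α k) • u x) 2 volume ≤
        ENNReal.ofReal
          (ε * ((∫ x, ‖u x‖ ^ 2) + (∫ x, ‖fderiv ℝ u x‖ ^ 2) +
              ∫ k, √(1 + ‖k‖ ^ 2) * ‖α k‖ ^ 2) +
            C * ∫ x, ‖u x‖ ^ 2) := by
  obtain ⟨C, hC, hbound⟩ := exists_eLpNorm_integral_cexp_smul_smul_le (E := E) (F := F)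
    (s := 1 / 2 - σ) (by linarith) (by linarith) (ENNReal.ofReal_pos.2 hε).ne' ENNReal.ofReal_ne_top
  refine ⟨C, hC, fun u α hd hu hu' hα hα2 hα1 ↦ ?_⟩
  set f : E → ℂ := fun k ↦ √(1 + ‖k‖ ^ 2) ^ σ • α k with hf
  have hfi : Integrable f := integrable_sqrt_rpow_smul hα.aestronglyMeasurable hα1
  have hintegrand (k x : E) : ((√(1 + ‖k‖ ^ 2) ^ σ : ℝ) : ℂ) *
      Complex.exp (Complex.I * (inner ℝ k x : ℝ)) * α k =
      Complex.exp (Complex.I * (inner ℝ k x : ℝ)) • f k := by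
    simp only [hf, Complex.real_smul, smul_eq_mul]
    ring
  simp only [hintegrand]
  have hfield := (continuous_integral_cexp_inner_smul hfi).aestronglyMeasurable.smul hu.1
  have hle := hbound (by fun_prop) hfi hd hu hu'
  rw [hf, bracketNormSq_sqrt_rpow_smul, sub_add_cancel, bracketNormSq_one_half hα.norm hα2,
    lintegral_enorm_sq_eq_ofReal hu, lintegral_enorm_sq_eq_ofReal hu',
    ← ENNReal.ofReal_add (by positivity) (by positivity),
    ← ENNReal.ofReal_add (by positivity) (by positivity), ← ENNReal.ofReal_mul hε.le,
    ← ENNReal.ofReal_mul hC.le, ← ENNReal.ofReal_add (by positivity) (by positivity)] at hle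
  exact ⟨⟨hfield, hle.trans_lt ENNReal.ofReal_lt_top⟩, hle⟩

end Multiplication

/-- For every `ε > 0` there is `C > 0` such that for differentiable `u` with `u, ∇u ∈ L²`
and `α` with `∫ ω|α|² < ∞`, `∫ ω^{-1/2}|α| < ∞`, the function
`x ↦ (∫ ω(k)^{−1/2} e^{ik·x} α(k) dk)·u(x)` is in `L²` with
`‖·‖_{L²} ≤ ε(‖u‖_{H¹}² + ∫ ω|α|²) + C‖u‖_{L²}²`. -/
theorem G_alpha_u_bound (ε : ℝ) (hε : 0 < ε) :
    ∃ C > 0, ∀ (u : EuclideanSpace ℝ (Fin 3) → ℂ)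
      (α : EuclideanSpace ℝ (Fin 3) → ℂ),
      Differentiable ℝ u → MemLp u 2 volume →
      MemLp (fun x => fderiv ℝ u x) 2 volume →
      Measurable α →
      (∫⁻ k, ENNReal.ofReal (ω k * ‖α k‖ ^ 2) < ⊤) →
      (∫⁻ k, ENNReal.ofReal (ω k ^ (-(1 : ℝ) / 2) * ‖α k‖) < ⊤) →
      MemLp (fun x =>
          (∫ k, ((ω k ^ (-(1 : ℝ) / 2) : ℝ) : ℂ) *
            Complex.exp (Complex.I * ((inner ℝ k x : ℝ) : ℂ)) * α k) * u x) 2 volume ∧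
      eLpNorm (fun x =>
          (∫ k, ((ω k ^ (-(1 : ℝ) / 2) : ℝ) : ℂ) *
            Complex.exp (Complex.I * ((inner ℝ k x : ℝ) : ℂ)) * α k) * u x) 2 volume ≤
        ENNReal.ofReal
          (ε * (H1sq u + ∫ k, ω k * ‖α k‖ ^ 2) +
            C * ∫ x, ‖u x‖ ^ 2) :=
  G_alpha_u_bound_general (by norm_num) (by norm_num) hε

end
end
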